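/- Let k, p ≥ 1 and C_1,…,C_p ∈ ℝ^k. Let τ_1,…,τ_k > 0 be pairwise distinct real numbers, let ω_1,…,ω_k, φ_1,…,φ_k be real numbers such that there exist infinitely many integers n with nω_j + φ_j ≢ π/2 (mod π) for every j ∈ {1,…,k}, and let (Q_n)_{n≥1} be an increasing sequence of positive integers with log Q_{n+1} ≤ (1 + M/n)·log Q_n for some constant M > 0 and all n (if all ω_j = 0 it suffices that (log Q_{n+1})/(log Q_n) → 1). For each n ≥ 1 let ℓ_{1,n},…,ℓ_{p,n} ∈ ℤ be such that max_{1≤i≤p}|ℓ_{i,n}| ≤ Q_n^{1+θ_n} with θ_n → 0, and such that for each j ∈ {1,…,k} the j-th coordinate of the vector ℓ_{1,n}C_1 + … + ℓ_{p,n}C_p has absolute value equal to Q_n^{−τ_j+ε_{j,n}} · |cos(nω_j+φ_j) + η_{j,n}| with ε_{j,n} → 0 and η_{j,n} → 0. Then the rank over ℚ of the family C_1,…,C_p, in ℝ^k viewed as a vector space over ℚ, is at least k + τ_1 + … + τ_k. -/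

import Mathlib

/-!
Write `C` for the matrix with rows `C_1, …, C_p`. The hypotheses make, for every large `T` and not
only for `T = log Q_n`, an integer vector `x` of size `exp (T + o(T))` such that `x C` has `j`-th
coordinate of size `exp (-τ_j T + o(T))`: the cosines are bounded away from zero along a set of
indices with bounded gaps, and `log Q_{n+1} / log Q_n → 1` makes such gaps harmless. Replacing `C`
by the coordinates of its rows over a `ℚ`-basis of their span, one may assume that `p` is the rank.

If `p < k + ∑ τ_j`, Minkowski's linear forms theorem gives for every large `Y` an integer vector
`P ≠ 0` within `exp (-(1 + ε) Y)` of a combination `C λ` of the columns, with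
`|λ_j| ≤ exp ((τ_j - ε) Y)`. The exponential sum `∑ |λ_j| exp (-τ_j T)` is tiny at `T = Y` and
bounded below at a fixed `T`, as `P` is integral, so it takes the value `exp (-ε Y / 2)` in between.
Since the `τ_j` are distinct, at a nearby time one term dominates; hence `x C λ` has the size of the
sum, with no cancellation. Then the integer `x · P ≈ x C λ` is nonzero and of absolute value less
than one.
-/

open Filter Topology Matrix

/-! ### Minkowski's linear forms theorem -/

theorem exists_int_ne_zero_abs_apply_le_of_abs_det_lt {κ : Type*} [Fintype κ]
    (f : (κ → ℝ) →ₗ[ℝ] κ → ℝ) (hf : LinearMap.det f ≠ 0) {B : κ → ℝ}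
    (hB : ∀ i, 0 ≤ B i) (hdet : |LinearMap.det f| < ∏ i, B i) :
    ∃ P : κ → ℤ, P ≠ 0 ∧ ∀ i, |f (fun s => P s) i| ≤ B i := by
  classical
  let b := Pi.basisFun ℝ κ
  let box : Set (κ → ℝ) := Set.pi Set.univ fun i => Set.Icc (-B i) (B i)
  have hbox : MeasureTheory.volume box = ENNReal.ofReal (2 ^ Fintype.card κ * ∏ i, B i) := by
    rw [MeasureTheory.volume_pi_pi, ← Finset.card_univ, ← Finset.prod_const,
      ← Finset.prod_mul_distrib, ENNReal.ofReal_prod_of_nonneg fun i _ => by linarith [hB i]]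
    exact Finset.prod_congr rfl fun i _ => by rw [Real.volume_Icc]; ring_nf
  have hvol : MeasureTheory.volume (ZSpan.fundamentalDomain b) * 2 ^ Module.finrank ℝ (κ → ℝ) <
      MeasureTheory.volume (f ⁻¹' box) := by
    rw [MeasureTheory.Measure.addHaar_preimage_linearMap _ hf, hbox,
      ZSpan.fundamentalDomain_pi_basisFun, MeasureTheory.volume_pi_pi,
      Module.finrank_fintype_fun_eq_card, ← ENNReal.ofReal_mul (abs_nonneg _)]
    simp only [Real.volume_Ico, sub_zero, ENNReal.ofReal_one, Finset.prod_const_one, one_mul]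
    rw [← ENNReal.ofReal_ofNat, ← ENNReal.ofReal_pow zero_le_two,
      ENNReal.ofReal_lt_ofReal_iff_of_nonneg (by positivity), abs_inv, mul_left_comm]
    refine lt_mul_of_one_lt_right (by positivity) ?_
    rwa [inv_mul_eq_div, one_lt_div (abs_pos.mpr hf)]
  have hsymm : ∀ x ∈ f ⁻¹' box, -x ∈ f ⁻¹' box := fun x hx i hi => by
    have := hx i hi
    simp only [map_neg, Pi.neg_apply, Set.mem_Icc] at this ⊢
    constructor <;> linarith
  have hconv : Convex ℝ (f ⁻¹' box) :=
    (convex_pi fun i _ => convex_Icc (-B i) (B i)).linear_preimage f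
  have : Countable (Submodule.span ℤ (Set.range b)).toAddSubgroup :=
    inferInstanceAs (Countable (Submodule.span ℤ (Set.range b)))
  obtain ⟨⟨x, hx⟩, hx0, hxbox⟩ :=
    MeasureTheory.exists_ne_zero_mem_lattice_of_measure_mul_two_pow_lt_measure
      (ZSpan.isAddFundamentalDomain' b MeasureTheory.volume) hsymm hconv hvol
  choose P hP using (b.mem_span_iff_repr_mem ℤ x).mp hx
  obtain rfl : (fun s => (P s : ℝ)) = x := funext fun s => by simpa [b] using hP s
  refine ⟨P, ?_, fun i => abs_le.mpr (hxbox i trivial)⟩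
  rintro rfl
  exact hx0 (Subtype.ext (funext fun _ => Int.cast_zero))

theorem exists_forall_lt_prod_exists_int_ne_zero_abs_apply_le {κ α : Type*} [Finite κ]
    [Fintype α] (f : (κ → ℝ) ≃ₗ[ℝ] α → ℝ) :
    ∃ c : ℝ, ∀ B : α → ℝ, (∀ a, 0 ≤ B a) → c < ∏ a, B a →
      ∃ P : κ → ℤ, P ≠ 0 ∧ ∀ a, |f (fun s => P s) a| ≤ B a := by
  cases nonempty_fintype κ
  have hcard : Fintype.card α = Fintype.card κ := by simpa using f.finrank_eq.symm
  let e : κ ≃ α := (Fintype.equivOfCardEq hcard).symm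
  let g : (κ → ℝ) ≃ₗ[ℝ] κ → ℝ := f.trans (LinearEquiv.funCongrLeft ℝ ℝ e)
  refine ⟨|LinearMap.det (g : (κ → ℝ) →ₗ[ℝ] κ → ℝ)|, fun B hB hc => ?_⟩
  rw [← e.prod_comp] at hc
  obtain ⟨P, hP0, hP⟩ := exists_int_ne_zero_abs_apply_le_of_abs_det_lt _
    g.isUnit_det'.ne_zero (fun s => hB (e s)) hc
  exact ⟨P, hP0, e.forall_congr_right.mp hP⟩

theorem exists_basis_sum_fin {ι K V : Type*} [DivisionRing K] [AddCommGroup V]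
    [Module K V] [FiniteDimensional K V] {v : ι → V} (hv : LinearIndependent K v) :
    ∃ (m : ℕ) (b : Module.Basis (ι ⊕ Fin m) K V), ∀ j, b (Sum.inl j) = v j := by
  have := Module.Finite.finite_basis (Module.Basis.sumExtend hv)
  have : Finite (Module.Basis.sumExtendIndex hv) := Finite.sum_right ι
  obtain ⟨m, ⟨e⟩⟩ := Finite.exists_equiv_fin (Module.Basis.sumExtendIndex hv)
  refine ⟨m, (Module.Basis.sumExtend hv).reindex ((Equiv.refl ι).sumCongr e), fun j => ?_⟩
  simp only [Module.Basis.sumExtend, Equiv.trans_def, Module.Basis.coe_reindex,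
    Module.Basis.coe_extend, Equiv.sumCongr_symm, Equiv.refl_symm, Function.comp_apply,
    Equiv.sumCongr_apply, Equiv.coe_refl, Sum.map_inl, id_eq]
  rfl

theorem exists_linearCombination_of_finrank_span {R K V κ : Type*} [CommRing R] [Field K]
    [Algebra R K] [IsFractionRing R K] [AddCommGroup V] [Module K V] [Finite κ] (v : κ → V) :
    ∃ (a : κ → Fin (Module.finrank K (Submodule.span K (Set.range v))) → R)
      (w : Fin (Module.finrank K (Submodule.span K (Set.range v))) → V),
      ∀ i, v i = ∑ s, algebraMap R K (a i s) • w s := by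
  have : Module.Finite K (Submodule.span K (Set.range v)) :=
    Module.Finite.span_of_finite K (Set.finite_range v)
  let b := Module.finBasis K (Submodule.span K (Set.range v))
  let v' (i : κ) : Submodule.span K (Set.range v) := ⟨v i, Submodule.subset_span ⟨i, rfl⟩⟩
  obtain ⟨d, hd⟩ := IsLocalization.exist_integer_multiples_of_finite (nonZeroDivisors R)
    fun q : κ × Fin (Module.finrank K (Submodule.span K (Set.range v))) => b.repr (v' q.1) q.2
  choose a ha using hd
  have hd0 : algebraMap R K d ≠ 0 := (IsLocalization.map_units K d).ne_zero
  refine ⟨fun i s => a (i, s), fun s => (algebraMap R K d)⁻¹ • (b s : V), fun i => ?_⟩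
  calc v i = ((∑ s, b.repr (v' i) s • b s : Submodule.span K (Set.range v)) : V) := by
        rw [b.sum_repr]
    _ = ∑ s, b.repr (v' i) s • (b s : V) := by push_cast; rfl
    _ = ∑ s, algebraMap R K (a (i, s)) • (algebraMap R K d)⁻¹ • (b s : V) :=
        Finset.sum_congr rfl fun s _ => by
          rw [ha, Algebra.smul_def, smul_smul, mul_right_comm, mul_inv_cancel₀ hd0, one_mul]

/-! ### Sets of indices with bounded gaps -/

/-- A set of natural numbers is syndetic if it has bounded gaps: some `H` is such that the set meets
`[n, n + H]` for every `n`. -/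
def IsSyndetic (s : Set ℕ) : Prop :=
  ∃ H : ℕ, ∀ n, ∃ m ∈ Set.Icc n (n + H), m ∈ s

theorem isSyndetic_setOf_nsmul_mem {G : Type*} [AddGroup G] [UniformSpace G] [IsUniformAddGroup G]
    [CompactSpace G] (g : G) {U : Set G} (hU : U ∈ 𝓝 0) :
    IsSyndetic {n | n • g ∈ U} := by
  have hrange : TotallyBounded (Set.range fun n : ℕ => n • g) :=
    isCompact_univ.totallyBounded.subset (Set.subset_univ _)
  have hV : {q : G × G | q.1 - q.2 ∈ U} ∈ uniformity G := by
    rw [uniformity_eq_comap_nhds_zero_swapped]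
    exact preimage_mem_comap hU
  obtain ⟨t, htg, htfin, hcover⟩ := totallyBounded_iff_subset.mp hrange _ hV
  choose! r hr using show ∀ y ∈ t, ∃ n : ℕ, n • g = y from fun y hy => htg hy
  obtain ⟨H, hH⟩ := (htfin.image r).bddAbove
  refine ⟨H, fun n => ?_⟩
  obtain ⟨y, hy, hyU⟩ := Set.mem_iUnion₂.mp (hcover ⟨n + H, rfl⟩)
  have hyH : r y ≤ H := hH ⟨y, hy, rfl⟩
  refine ⟨n + H - r y, ⟨by lia, by lia⟩, ?_⟩
  have hsub : (n + H - r y) • g = (n + H) • g - y := by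
    rw [sub_nsmul g (by lia), ← sub_eq_add_neg, hr y hy]
  simpa only [Set.mem_ofPred_eq, hsub] using hyU

theorem exists_isSyndetic_setOf_lt_abs_cos {ι : Type*} [Finite ι] {ω φ : ι → ℝ} {n₀ : ℕ}
    (h : ∀ j, Real.cos (n₀ * ω j + φ j) ≠ 0) :
    ∃ c > 0, IsSyndetic {n : ℕ | ∀ j, c < |Real.cos (n * ω j + φ j)|} := by
  obtain ⟨c, hc, hcos⟩ := Pi.exists_forall_pos_add_lt fun j => abs_pos.mpr (h j)
  have : Fact (0 < 2 * Real.pi) := ⟨Real.two_pi_pos⟩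
  have : CompactSpace Real.Angle := inferInstanceAs (CompactSpace (AddCircle (2 * Real.pi)))
  have hU : {α : ι → Real.Angle |
      ∀ j, c < |Real.Angle.cos (((n₀ * ω j + φ j : ℝ) : Real.Angle) + α j)|} ∈ 𝓝 0 := by
    refine eventually_all.mpr fun j => ?_
    have hcont : Continuous fun α : ι → Real.Angle =>
        |Real.Angle.cos (((n₀ * ω j + φ j : ℝ) : Real.Angle) + α j)| :=
      (Real.Angle.continuous_cos.comp (continuous_const.add (continuous_apply j))).abs
    refine hcont.continuousAt.eventually (lt_mem_nhds ?_)
    simpa only [Pi.zero_apply, add_zero, Real.Angle.cos_coe, zero_add] using hcos j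
  obtain ⟨H, hH⟩ := isSyndetic_setOf_nsmul_mem (fun j => (ω j : Real.Angle)) hU
  refine ⟨c, hc, n₀ + H, fun n => ?_⟩
  obtain ⟨m, ⟨hnm, hmn⟩, hm⟩ := hH n
  refine ⟨n₀ + m, ⟨by lia, by lia⟩, fun j => ?_⟩
  have hangle : ((n₀ * ω j + φ j : ℝ) : Real.Angle) + m • (ω j : Real.Angle) =
      (((n₀ + m : ℕ) * ω j + φ j : ℝ) : Real.Angle) := by
    rw [← Real.Angle.coe_nsmul, ← Real.Angle.coe_add]
    push_cast
    ring_nf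
  simpa only [Pi.smul_apply, hangle, Real.Angle.cos_coe] using hm j

theorem tendsto_div_add_of_tendsto_div_succ {t : ℕ → ℝ} (ht : ∀ᶠ n in atTop, t n ≠ 0)
    (h : Tendsto (fun n => t (n + 1) / t n) atTop (𝓝 1)) (H : ℕ) :
    Tendsto (fun n => t (n + H) / t n) atTop (𝓝 1) := by
  induction H with
  | zero => exact tendsto_const_nhds.congr' (ht.mono fun n hn => (div_self hn).symm)
  | succ H ih =>
    have hmul := (h.comp (tendsto_add_atTop_nat H)).mul ih
    rw [mul_one] at hmul
    refine hmul.congr' ?_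
    filter_upwards [(tendsto_add_atTop_nat H).eventually ht] with n hn
    exact div_mul_div_cancel₀ hn

theorem IsSyndetic.exists_tendsto_div_id {s : Set ℕ} (hs : IsSyndetic s) {t : ℕ → ℝ}
    (hmono : Monotone t) (htop : Tendsto t atTop atTop)
    (hratio : Tendsto (fun n => t (n + 1) / t n) atTop (𝓝 1)) :
    ∃ m : ℝ → ℕ, (∀ T, m T ∈ s) ∧ Tendsto m atTop atTop ∧
      Tendsto (fun T => t (m T) / T) atTop (𝓝 1) := by
  classical
  obtain ⟨H, hH⟩ := hs
  choose g hg hgs using hH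
  have hex (T : ℝ) : ∃ n, T ≤ t n := (htop.eventually_ge_atTop T).exists
  let first (T : ℝ) : ℕ := Nat.find (hex T)
  have hfirst (T : ℝ) : T ≤ t (first T) := Nat.find_spec (hex T)
  have tendsto_index {f : ℝ → ℕ} (hf : ∀ T, T ≤ t (f T)) : Tendsto f atTop atTop := by
    refine tendsto_atTop.mpr fun N => (eventually_gt_atTop (t N)).mono fun T hT => ?_
    exact (hmono.reflect_lt (hT.trans_le (hf T))).le
  have hle (T : ℝ) : T ≤ t (g (first T)) := (hfirst T).trans (hmono (hg _).1)
  refine ⟨fun T => g (first T), fun T => hgs _, tendsto_index hle, ?_⟩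
  have hpred : Tendsto (fun T => first T - 1) atTop atTop :=
    (tendsto_sub_atTop_nat 1).comp (tendsto_index hfirst)
  have hupper := (tendsto_div_add_of_tendsto_div_succ (htop.eventually_ne_atTop 0) hratio
    (H + 1)).comp hpred
  refine tendsto_of_tendsto_of_tendsto_of_le_of_le' tendsto_const_nhds hupper ?_ ?_
  · filter_upwards [eventually_gt_atTop 0] with T hT
    exact (one_le_div hT).mpr (hle T)
  · filter_upwards [(tendsto_index hfirst).eventually_gt_atTop 0,
      (htop.comp hpred).eventually_gt_atTop 0] with T hpos htpos
    have hlt : t (first T - 1) < T := not_le.mp (Nat.find_min (hex T) (Nat.sub_lt hpos one_pos))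
    have htle : t (g (first T)) ≤ t (first T - 1 + (H + 1)) :=
      hmono ((hg _).2.trans (by lia))
    have := htpos.trans hlt
    exact div_le_div₀ (htpos.le.trans (hlt.le.trans ((hle T).trans htle))) htle htpos hlt.le

/-! ### Dominant terms of exponential sums -/

theorem eventually_le_exp_mul {a : ℝ} (ha : 0 < a) (K : ℝ) :
    ∀ᶠ T : ℝ in atTop, K ≤ Real.exp (a * T) :=
  (Real.tendsto_exp_atTop.comp (tendsto_id.const_mul_atTop ha)).eventually_ge_atTop K

theorem exists_pos_forall_le_abs_sub {ι : Type*} [Finite ι] {τ : ι → ℝ}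
    (hτ : Function.Injective τ) : ∃ γ > 0, ∀ i j, i ≠ j → γ ≤ |τ i - τ j| := by
  obtain ⟨γ, hγ, h⟩ := Pi.exists_forall_pos_add_lt
    fun q : {q : ι × ι // q.1 ≠ q.2} => abs_pos.mpr (sub_ne_zero.mpr (hτ.ne q.2))
  exact ⟨γ, hγ, fun i j hij => by simpa only [zero_add] using (h ⟨(i, j), hij⟩).le⟩

theorem mul_exp_le_of_mul_exp_le {a b τ σ S T d : ℝ} (hb : 0 ≤ b)
    (h : a * Real.exp (-τ * S) ≤ b * Real.exp (-σ * S)) (hd : d ≤ (τ - σ) * (T - S)) :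
    a * Real.exp (-τ * T) ≤ Real.exp (-d) * (b * Real.exp (-σ * T)) :=
  calc a * Real.exp (-τ * T) = a * Real.exp (-τ * S) * Real.exp (-τ * (T - S)) := by
        rw [mul_assoc, ← Real.exp_add]; ring_nf
    _ ≤ b * Real.exp (-σ * S) * Real.exp (-τ * (T - S)) := by gcongr
    _ = Real.exp (-((τ - σ) * (T - S))) * (b * Real.exp (-σ * T)) := by
        rw [mul_assoc, ← Real.exp_add, mul_left_comm, ← Real.exp_add]; ring_nf
    _ ≤ Real.exp (-d) * (b * Real.exp (-σ * T)) := by gcongr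

section
variable {ι : Type*} [Fintype ι]

theorem exists_dominant_term [Nonempty ι] (τ lam : ι → ℝ) (S : ℝ) {D : ℝ} (hD : 0 ≤ D) :
    ∃ T ∈ Set.Icc S (S + Fintype.card ι * D), ∃ j, ∀ m,
      |lam m| * Real.exp (-τ m * T) ≤
        Real.exp (-(|τ m - τ j| * (D / 2))) * (|lam j| * Real.exp (-τ j * T)) := by
  -- Of `card ι + 1` equally spaced times, two have the same largest term `J a = J b`. The ratio of
  -- another term to it is exponential in `T`, so it has decayed at the midpoint of the two times.
  let time (i : Fin (Fintype.card ι + 1)) : ℝ := S + i * D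
  choose J hJ using fun i =>
    Finite.exists_max fun m => |lam m| * Real.exp (-τ m * time i)
  obtain ⟨a, b, hab, hJab⟩ : ∃ a b, a < b ∧ J a = J b := by
    obtain ⟨a, b, hne, heq⟩ := Fintype.exists_ne_map_eq_of_card_lt J (by simp)
    rcases hne.lt_or_gt with h | h
    exacts [⟨a, b, h, heq⟩, ⟨b, a, h, heq.symm⟩]
  have hgap : ((a : ℕ) : ℝ) + 1 ≤ (b : ℕ) := mod_cast hab
  have hlast : ((b : ℕ) : ℝ) ≤ Fintype.card ι := mod_cast b.is_le
  have hstep : D ≤ time b - time a := by simp only [time]; nlinarith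
  have hstart : S ≤ time a := le_add_of_nonneg_right (by positivity)
  have hend : time b ≤ S + Fintype.card ι * D := by simp only [time]; gcongr
  refine ⟨(time a + time b) / 2, ⟨by linarith, by linarith⟩, J a, fun m => ?_⟩
  rcases le_total (τ (J a)) (τ m) with h | h
  · refine mul_exp_le_of_mul_exp_le (abs_nonneg _) (hJ a m) ?_
    rw [abs_of_nonneg (sub_nonneg.mpr h)]
    exact mul_le_mul_of_nonneg_left (by linarith) (sub_nonneg.mpr h)
  · refine mul_exp_le_of_mul_exp_le (abs_nonneg _) (hJab ▸ hJ b m) ?_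
    rw [abs_of_nonpos (sub_nonpos.mpr h), neg_mul, ← mul_neg]
    exact mul_le_mul_of_nonpos_left (by linarith) (sub_nonpos.mpr h)

theorem abs_le_two_mul_abs_sum {a : ι → ℝ} {j : ι} {q : ℝ} (hq : 0 ≤ q)
    (ha : ∀ m ≠ j, |a m| ≤ q * |a j|) (hcard : Fintype.card ι * q ≤ 1 / 2) :
    |a j| ≤ 2 * |∑ m, a m| := by
  classical
  have hrest : |∑ m ∈ Finset.univ.erase j, a m| ≤ 1 / 2 * |a j| :=
    calc |∑ m ∈ Finset.univ.erase j, a m| ≤ ∑ m ∈ Finset.univ.erase j, |a m| :=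
          Finset.abs_sum_le_sum_abs _ _
      _ ≤ (Finset.univ.erase j).card • (q * |a j|) :=
          Finset.sum_le_card_nsmul _ _ _ fun m hm => ha m (Finset.ne_of_mem_erase hm)
      _ ≤ Fintype.card ι * (q * |a j|) := by
          rw [nsmul_eq_mul]
          gcongr
          exact Finset.card_erase_le
      _ ≤ 1 / 2 * |a j| := by
          rw [← mul_assoc]
          gcongr
  have htriangle := abs_sub_abs_le_abs_add (a j) (∑ m ∈ Finset.univ.erase j, a m)
  rw [Finset.add_sum_erase _ _ (Finset.mem_univ j)] at htriangle
  linarith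

/-- The exponential sum `∑ j, |lam j| * exp (-τ j * T)`. For `T = log Q` it is the size that
`lam` can give to a linear combination of quantities of order `Q ^ (-τ j)`. -/
noncomputable def expSum (τ lam : ι → ℝ) (T : ℝ) : ℝ :=
  ∑ j, |lam j| * Real.exp (-τ j * T)

theorem continuous_expSum (τ lam : ι → ℝ) : Continuous (expSum τ lam) := by
  unfold expSum
  fun_prop

theorem expSum_nonneg (τ lam : ι → ℝ) (T : ℝ) : 0 ≤ expSum τ lam T :=
  Finset.sum_nonneg fun _ _ => by positivity

theorem abs_mul_exp_le_expSum (τ lam : ι → ℝ) (T : ℝ) (j : ι) :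
    |lam j| * Real.exp (-τ j * T) ≤ expSum τ lam T :=
  Finset.single_le_sum (f := fun j => |lam j| * Real.exp (-τ j * T))
    (fun _ _ => by positivity) (Finset.mem_univ j)

theorem expSum_le_exp_mul_expSum {τ : ι → ℝ} {A : ℝ} (hA : ∀ j, |τ j| ≤ A) (lam : ι → ℝ)
    (S T : ℝ) : expSum τ lam S ≤ Real.exp (A * |T - S|) * expSum τ lam T := by
  rw [expSum, expSum, Finset.mul_sum]
  refine Finset.sum_le_sum fun j _ => ?_
  have hexp : -τ j * S ≤ A * |T - S| + -τ j * T := by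
    have := (le_abs_self (τ j * (T - S))).trans_eq (abs_mul _ _)
    have := mul_le_mul_of_nonneg_right (hA j) (abs_nonneg (T - S))
    linarith
  rw [mul_left_comm, ← Real.exp_add]
  gcongr

theorem abs_dotProduct_le_mul_expSum {τ L : ι → ℝ} {T E : ℝ}
    (hL : ∀ j, |L j| ≤ E * Real.exp (-τ j * T)) (lam : ι → ℝ) :
    |L ⬝ᵥ lam| ≤ E * expSum τ lam T := by
  rw [expSum, Finset.mul_sum]
  refine (Finset.abs_sum_le_sum_abs _ _).trans (Finset.sum_le_sum fun j _ => ?_)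
  rw [abs_mul, mul_comm, mul_left_comm]
  exact mul_le_mul_of_nonneg_left (hL j) (abs_nonneg _)

theorem expSum_le_mul_abs_dotProduct {τ lam L : ι → ℝ} {T e g : ℝ} {j : ι}
    (hupper : ∀ m, |L m| ≤ Real.exp e * Real.exp (-τ m * T))
    (hlower : Real.exp (-τ j * T) ≤ Real.exp e * |L j|)
    (hdom : ∀ m ≠ j,
      |lam m| * Real.exp (-τ m * T) ≤ Real.exp (-g) * (|lam j| * Real.exp (-τ j * T)))
    (hg : 0 ≤ g) (hcard : 2 * Fintype.card ι ≤ Real.exp (g - 2 * e)) :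
    expSum τ lam T ≤ 2 * Fintype.card ι * Real.exp e * |L ⬝ᵥ lam| := by
  set E := Real.exp e with hE_def
  set q := Real.exp (-g) with hq_def
  have hE : 0 ≤ E := Real.exp_nonneg e
  have hq : 0 ≤ q := Real.exp_nonneg (-g)
  have hqE : Fintype.card ι * (q * E ^ 2) ≤ 1 / 2 := by
    rw [hE_def, hq_def, ← Real.exp_nat_mul, ← Real.exp_add, Nat.cast_ofNat,
      show -g + 2 * e = -(g - 2 * e) by ring, Real.exp_neg, ← div_eq_mul_inv,
      div_le_div_iff₀ (Real.exp_pos _) two_pos]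
    linarith
  have hj : |lam j| * Real.exp (-τ j * T) ≤ E * |L j * lam j| := by
    rw [abs_mul, mul_comm |L j|, mul_left_comm]
    gcongr
  have hsmall (m) (hm : m ≠ j) : |L m * lam m| ≤ q * E ^ 2 * |L j * lam j| :=
    calc |L m * lam m| ≤ E * (|lam m| * Real.exp (-τ m * T)) := by
          rw [abs_mul, mul_comm, mul_left_comm]
          exact mul_le_mul_of_nonneg_left (hupper m) (abs_nonneg _)
      _ ≤ E * (q * (E * |L j * lam j|)) :=
          mul_le_mul_of_nonneg_left
            ((hdom m hm).trans (mul_le_mul_of_nonneg_left hj hq)) hE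
      _ = q * E ^ 2 * |L j * lam j| := by ring
  have hmax (m) : |lam m| * Real.exp (-τ m * T) ≤ |lam j| * Real.exp (-τ j * T) := by
    rcases eq_or_ne m j with rfl | hm
    · rfl
    · exact (hdom m hm).trans (mul_le_of_le_one_left (by positivity)
        (Real.exp_le_one_iff.mpr (neg_nonpos.mpr hg)))
  have hsum : |L j * lam j| ≤ 2 * |L ⬝ᵥ lam| :=
    abs_le_two_mul_abs_sum (a := fun m => L m * lam m)
      (mul_nonneg hq (sq_nonneg E)) hsmall hqE
  calc expSum τ lam T ≤ Fintype.card ι * (|lam j| * Real.exp (-τ j * T)) := by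
        rw [← nsmul_eq_mul]
        exact Finset.sum_le_card_nsmul _ _ _ fun m _ => hmax m
    _ ≤ Fintype.card ι * (E * (2 * |L ⬝ᵥ lam|)) :=
        mul_le_mul_of_nonneg_left (hj.trans (mul_le_mul_of_nonneg_left hsum hE))
          (Nat.cast_nonneg _)
    _ = 2 * Fintype.card ι * E * |L ⬝ᵥ lam| := by ring

variable {κ : Type*} [Fintype κ]

/-! ### Integer approximations -/

/-- The columns of `C` have simultaneous integer approximations of exponents `τ`: for every large
`Q`, some integer linear combination of the rows with coefficients at most `Q ^ (1 + o(1))` has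
`j`-th coordinate of absolute value `Q ^ (-τ j + o(1))` for each `j`. The size `Q` is encoded by its
logarithm `T`, and runs over all large reals rather than over a sequence. -/
def HasIntegerApproximations (τ : ι → ℝ) (C : Matrix κ ι ℝ) : Prop :=
  ∀ δ > 0, ∀ᶠ T : ℝ in atTop, ∃ x : κ → ℤ, (∀ i, |(x i : ℝ)| ≤ Real.exp ((1 + δ) * T)) ∧
    ∀ j, |((Int.cast ∘ x) ᵥ* C) j| ∈
      Set.Icc (Real.exp ((-τ j - δ) * T)) (Real.exp ((-τ j + δ) * T))

namespace HasIntegerApproximations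

variable {τ : ι → ℝ} {C : Matrix κ ι ℝ}

omit [Fintype ι] in
theorem eventually_exists_vecMul (h : HasIntegerApproximations τ C) {δ : ℝ} (hδ : 0 < δ) :
    ∀ᶠ T : ℝ in atTop, ∃ x : κ → ℤ, (∀ i, |(x i : ℝ)| ≤ Real.exp ((1 + δ) * T)) ∧ ∀ j,
      |((Int.cast ∘ x) ᵥ* C) j| ≤ Real.exp (δ * T) * Real.exp (-τ j * T) ∧
      Real.exp (-τ j * T) ≤ Real.exp (δ * T) * |((Int.cast ∘ x) ᵥ* C) j| := by
  filter_upwards [h δ hδ] with T ⟨x, hx, hL⟩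
  refine ⟨x, hx, fun j => ⟨?_, ?_⟩⟩
  · rw [← Real.exp_add, ← add_mul, add_comm δ]
    exact (hL j).2
  · calc Real.exp (-τ j * T) = Real.exp (δ * T) * Real.exp ((-τ j - δ) * T) := by
          rw [← Real.exp_add]; ring_nf
      _ ≤ _ := by gcongr; exact (hL j).1

theorem exists_abs_dotProduct_near [Nonempty ι] (h : HasIntegerApproximations τ C)
    (hτ : Function.Injective τ) {δ : ℝ} (hδ : 0 < δ) :
    ∀ᶠ S : ℝ in atTop, ∀ lam : ι → ℝ, ∃ T ∈ Set.Icc S ((1 + δ) * S), ∃ x : κ → ℤ,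
      (∀ i, |(x i : ℝ)| ≤ Real.exp ((1 + δ) * T)) ∧
      expSum τ lam T ≤ Real.exp (δ * T) * |(Int.cast ∘ x) ᵥ* C ⬝ᵥ lam| ∧
      |(Int.cast ∘ x) ᵥ* C ⬝ᵥ lam| ≤ Real.exp (δ * T) * expSum τ lam T := by
  obtain ⟨γ, hγ, hgap⟩ := exists_pos_forall_le_abs_sub hτ
  have hk : (0 : ℝ) < Fintype.card ι := mod_cast Fintype.card_pos
  set k : ℝ := (Fintype.card ι : ℝ) with hk_def
  set d : ℝ := min (δ / 2) (γ * δ / k / (8 * (1 + δ)))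
  have hd0 : 0 < d := by positivity
  have hdδ : d ≤ δ / 2 := min_le_left _ _
  have hdγ : d * (8 * (1 + δ)) ≤ γ * δ / k :=
    (le_div_iff₀ (by positivity)).mp (min_le_right _ _)
  obtain ⟨T₀, hT₀⟩ := eventually_atTop.mp (h.eventually_exists_vecMul hd0)
  filter_upwards [eventually_ge_atTop T₀, eventually_ge_atTop 0,
    eventually_le_exp_mul (half_pos hδ) (2 * k),
    eventually_le_exp_mul (show 0 < γ * δ / k / 4 by positivity) (2 * k)]
    with S hST₀ hS hlargeδ hlargeγ lam
  obtain ⟨T, ⟨hST, hTS⟩, j, hdom⟩ :=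
    exists_dominant_term τ lam S (show 0 ≤ δ * S / k by positivity)
  replace hTS : T ≤ (1 + δ) * S := hTS.trans_eq (by rw [← hk_def]; field_simp)
  obtain ⟨x, hx, hL⟩ := hT₀ T (hST₀.trans hST)
  have hT : 0 ≤ T := hS.trans hST
  refine ⟨T, ⟨hST, hTS⟩, x, fun i => (hx i).trans (by gcongr; linarith), ?_, ?_⟩
  · have hcard : 2 * k ≤ Real.exp (γ * (δ * S / k / 2) - 2 * (d * T)) := by
      refine hlargeγ.trans (Real.exp_le_exp.mpr ?_)
      have := mul_le_mul_of_nonneg_left hTS hd0.le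
      have := mul_le_mul_of_nonneg_right hdγ hS
      linarith [show γ * (δ * S / k / 2) = γ * δ / k * S / 2 by ring]
    have hdom' (m) (hm : m ≠ j) : |lam m| * Real.exp (-τ m * T) ≤
        Real.exp (-(γ * (δ * S / k / 2))) * (|lam j| * Real.exp (-τ j * T)) :=
      (hdom m).trans (by gcongr; exact hgap m j hm)
    refine (expSum_le_mul_abs_dotProduct (fun m => (hL m).1) (hL j).2 hdom' (by positivity)
      hcard).trans ?_
    gcongr
    calc 2 * k * Real.exp (d * T) ≤ Real.exp (δ / 2 * S) * Real.exp (d * T) := by gcongr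
      _ ≤ Real.exp (δ * T) := by
        rw [← Real.exp_add, Real.exp_le_exp]
        nlinarith
  · refine (abs_dotProduct_le_mul_expSum (fun m => (hL m).1) lam).trans ?_
    gcongr
    · exact expSum_nonneg _ _ _
    · linarith

theorem exists_abs_dotProduct_mem_Icc [Nonempty ι] (h : HasIntegerApproximations τ C)
    (hτ : Function.Injective τ) {δ : ℝ} (hδ : 0 < δ) :
    ∀ᶠ S : ℝ in atTop, ∀ lam : ι → ℝ, ∃ x : κ → ℤ,
      (∀ i, |(x i : ℝ)| ≤ Real.exp ((1 + δ) * S)) ∧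
      |(Int.cast ∘ x) ᵥ* C ⬝ᵥ lam| ∈
        Set.Icc (Real.exp (-(δ * S)) * expSum τ lam S) (Real.exp (δ * S) * expSum τ lam S) := by
  set A : ℝ := ∑ j, |τ j|
  have hA (j) : |τ j| ≤ A := Finset.single_le_sum (fun i _ => abs_nonneg (τ i)) (Finset.mem_univ j)
  have hA0 : 0 ≤ A := Finset.sum_nonneg fun _ _ => abs_nonneg _
  set d : ℝ := min 1 (δ / (A + 3))
  have hd : 0 < d := lt_min one_pos (by positivity)
  have hd1 : d ≤ 1 := min_le_left _ _
  have hdδ : d * (A + 3) ≤ δ := (le_div_iff₀ (by positivity)).mp (min_le_right _ _)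
  filter_upwards [h.exists_abs_dotProduct_near hτ hd, eventually_ge_atTop 0] with S hS hS0 lam
  obtain ⟨T, ⟨hST, hTS⟩, x, hx, hlower, hupper⟩ := hS lam
  have hdT : d * T ≤ d * (2 * S) := by gcongr; nlinarith
  have hloss : d * T + A * |T - S| ≤ δ * S := by
    rw [abs_of_nonneg (sub_nonneg.mpr hST)]
    nlinarith
  have hsize : (1 + d) * T ≤ (1 + δ) * S := by nlinarith
  refine ⟨x, fun i => (hx i).trans (by gcongr), ?_, ?_⟩
  · rw [Real.exp_neg, inv_mul_le_iff₀ (Real.exp_pos _)]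
    calc expSum τ lam S ≤ Real.exp (A * |T - S|) * expSum τ lam T :=
          expSum_le_exp_mul_expSum hA lam S T
      _ ≤ Real.exp (A * |T - S|) * (Real.exp (d * T) * |(Int.cast ∘ x) ᵥ* C ⬝ᵥ lam|) := by gcongr
      _ = Real.exp (d * T + A * |T - S|) * |(Int.cast ∘ x) ᵥ* C ⬝ᵥ lam| := by
          rw [← mul_assoc, ← Real.exp_add, add_comm]
      _ ≤ Real.exp (δ * S) * |(Int.cast ∘ x) ᵥ* C ⬝ᵥ lam| := by gcongr
  · calc |(Int.cast ∘ x) ᵥ* C ⬝ᵥ lam| ≤ Real.exp (d * T) * expSum τ lam T := hupper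
      _ ≤ Real.exp (d * T) * (Real.exp (A * |T - S|) * expSum τ lam S) := by
          rw [abs_sub_comm]
          gcongr
          exact expSum_le_exp_mul_expSum hA lam T S
      _ = Real.exp (d * T + A * |T - S|) * expSum τ lam S := by
          rw [← mul_assoc, ← Real.exp_add]
      _ ≤ Real.exp (δ * S) * expSum τ lam S := by
          gcongr
          exact expSum_nonneg _ _ _

omit [Fintype ι] in
theorem linearIndependent_col [Finite ι] (h : HasIntegerApproximations τ C)
    (hτ : Function.Injective τ) : LinearIndependent ℝ C.col := by
  cases nonempty_fintype ι
  cases isEmpty_or_nonempty ι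
  · exact linearIndependent_empty_type
  rw [← mulVec_injective_iff]
  refine (injective_iff_map_eq_zero C.mulVecLin).mpr fun lam hlam => ?_
  obtain ⟨S, hS⟩ := (h.exists_abs_dotProduct_mem_Icc hτ one_pos).exists
  obtain ⟨x, -, hx, -⟩ := hS lam
  rw [← dotProduct_mulVec, ← mulVecLin_apply, hlam, dotProduct_zero, abs_zero] at hx
  have hzero : expSum τ lam S ≤ 0 := nonpos_of_mul_nonpos_right hx (Real.exp_pos _)
  ext j
  have := (abs_mul_exp_le_expSum τ lam S j).trans hzero
  exact abs_nonpos_iff.mp (nonpos_of_mul_nonpos_left this (Real.exp_pos _))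

end HasIntegerApproximations

omit [Fintype κ] in
theorem sub_mulVec_equivFun_inl {α : Type*} [Fintype α] {C : Matrix κ ι ℝ}
    (b : Module.Basis (ι ⊕ α) ℝ (κ → ℝ)) (hb : ∀ j, b (Sum.inl j) = C.col j) (v : κ → ℝ) :
    v - C *ᵥ (fun j => b.equivFun v (Sum.inl j)) =
      ∑ s, b.equivFun v (Sum.inr s) • b (Sum.inr s) := by
  rw [sub_eq_iff_eq_add', mulVec_eq_sum]
  conv_lhs => rw [← b.sum_equivFun v, Fintype.sum_sum_type]
  simp only [hb, op_smul_eq_smul]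
  rfl

theorem exists_int_near_range_mulVec {τ : ι → ℝ} {C : Matrix κ ι ℝ}
    (hC : LinearIndependent ℝ C.col) (hcard : Fintype.card κ < Fintype.card ι + ∑ j, τ j) :
    ∃ ε > 0, ∃ K, ∀ᶠ Y : ℝ in atTop, ∃ P : κ → ℤ, P ≠ 0 ∧ ∃ lam : ι → ℝ,
      (∀ j, |lam j| ≤ Real.exp ((τ j - ε) * Y)) ∧
      ∀ i, |P i - (C *ᵥ lam) i| ≤ K * Real.exp (-(1 + ε) * Y) := by
  obtain ⟨m, b, hb⟩ := exists_basis_sum_fin hC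
  obtain ⟨c, hc⟩ := exists_forall_lt_prod_exists_int_ne_zero_abs_apply_le b.equivFun
  have hdim : (Fintype.card κ : ℝ) = Fintype.card ι + m := by
    simpa using congrArg (Nat.cast (R := ℝ)) (Module.finrank_eq_card_basis b)
  set σ : ℝ := ∑ j, τ j - m
  have hσ : 0 < σ := by simp only [σ]; linarith
  set ε : ℝ := σ / (2 * (Fintype.card κ + 1))
  have hε : 2 * (Fintype.card κ + 1) * ε = σ := by simp only [ε]; field_simp
  refine ⟨ε, by positivity, ∑ s, ‖b (Sum.inr s)‖, ?_⟩
  filter_upwards [eventually_le_exp_mul (half_pos hσ) (c + 1), eventually_ge_atTop 0]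
    with Y hcY hY
  let B : ι ⊕ Fin m → ℝ :=
    Sum.elim (fun j => Real.exp ((τ j - ε) * Y)) fun _ => Real.exp (-(1 + ε) * Y)
  have hB (a) : 0 ≤ B a := by rcases a with _ | _ <;> exact Real.exp_nonneg _
  have hprod : c < ∏ a, B a :=
    calc c < Real.exp (σ / 2 * Y) := by linarith
      _ ≤ Real.exp ((σ - Fintype.card κ * ε) * Y) := by gcongr; nlinarith
      _ = ∏ a, B a := by
        simp only [B, Fintype.prod_sum_type, Sum.elim_inl, Sum.elim_inr, ← Real.exp_sum,
          ← Real.exp_add, ← Finset.sum_mul, Finset.sum_sub_distrib, Finset.sum_const,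
          Finset.card_univ, nsmul_eq_mul, Fintype.card_fin, hdim, σ]
        ring_nf
  obtain ⟨P, hP0, hP⟩ := hc B hB hprod
  set f := b.equivFun fun i => (P i : ℝ)
  refine ⟨P, hP0, fun j => f (Sum.inl j), fun j => hP (Sum.inl j), fun i => ?_⟩
  have hdecomp : P i - (C *ᵥ fun j => f (Sum.inl j)) i =
      ∑ s, f (Sum.inr s) * b (Sum.inr s) i := by
    simpa only [Pi.sub_apply, Finset.sum_apply, Pi.smul_apply, smul_eq_mul] using
      congrFun (sub_mulVec_equivFun_inl b hb fun i => (P i : ℝ)) i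
  calc |P i - (C *ᵥ fun j => f (Sum.inl j)) i| ≤ ∑ s, |f (Sum.inr s) * b (Sum.inr s) i| :=
        hdecomp ▸ Finset.abs_sum_le_sum_abs _ _
    _ ≤ ∑ s, ‖b (Sum.inr s)‖ * Real.exp (-(1 + ε) * Y) := Finset.sum_le_sum fun s _ => by
        rw [abs_mul, mul_comm]
        exact mul_le_mul (norm_le_pi_norm (b (Sum.inr s)) i) (hP (Sum.inr s)) (abs_nonneg _)
          (norm_nonneg _)
    _ = (∑ s, ‖b (Sum.inr s)‖) * Real.exp (-(1 + ε) * Y) := (Finset.sum_mul ..).symm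

omit [Fintype κ] in
theorem exists_abs_mulVec_le_mul_expSum [Finite κ] (C : Matrix κ ι ℝ) (τ : ι → ℝ) (T : ℝ) :
    ∃ E, ∀ lam i, |(C *ᵥ lam) i| ≤ E * expSum τ lam T := by
  obtain ⟨E, hE⟩ := (Set.finite_range fun q : κ × ι =>
    |C q.1 q.2| * Real.exp (τ q.2 * T)).bddAbove
  refine ⟨E, fun lam i => abs_dotProduct_le_mul_expSum (fun j => ?_) lam⟩
  rw [neg_mul, Real.exp_neg, ← div_eq_mul_inv, le_div_iff₀ (Real.exp_pos _)]
  exact hE ⟨(i, j), rfl⟩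

theorem expSum_le_card_mul_exp {τ lam : ι → ℝ} {ε Y : ℝ}
    (hlam : ∀ j, |lam j| ≤ Real.exp ((τ j - ε) * Y)) :
    expSum τ lam Y ≤ Fintype.card ι * Real.exp (-(ε * Y)) :=
  calc expSum τ lam Y ≤ ∑ _j : ι, Real.exp (-(ε * Y)) := Finset.sum_le_sum fun j _ =>
        (mul_le_mul_of_nonneg_right (hlam j) (Real.exp_nonneg _)).trans_eq (by
          rw [← Real.exp_add]; ring_nf)
    _ = Fintype.card ι * Real.exp (-(ε * Y)) := by
        rw [Finset.sum_const, Finset.card_univ, nsmul_eq_mul]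

omit [Fintype κ] in
theorem exists_half_le_abs_of_int_near {P : κ → ℤ} (hP0 : P ≠ 0) {v : κ → ℝ}
    (h : ∀ i, |P i - v i| ≤ 1 / 2) : ∃ i, 1 / 2 ≤ |v i| := by
  obtain ⟨i, hi⟩ := Function.ne_iff.mp hP0
  have hPi : (1 : ℝ) ≤ |(P i : ℝ)| := mod_cast Int.one_le_abs hi
  exact ⟨i, by linarith [h i, abs_sub_abs_le_abs_sub (P i : ℝ) (v i)]⟩

theorem exists_int_near_range_mulVec_expSum_eq {τ : ι → ℝ} {C : Matrix κ ι ℝ}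
    (hC : LinearIndependent ℝ C.col) (hcard : Fintype.card κ < Fintype.card ι + ∑ j, τ j) :
    ∃ ε > 0, ∃ K, ∀ T₀, ∀ᶠ Y : ℝ in atTop, ∃ (P : κ → ℤ) (lam : ι → ℝ), ∃ T ∈ Set.Icc T₀ Y,
      expSum τ lam T = Real.exp (-(ε * Y)) ∧
      ∀ i, |P i - (C *ᵥ lam) i| ≤ K * Real.exp (-(1 + 2 * ε) * Y) := by
  obtain ⟨ε, hε, K, h⟩ := exists_int_near_range_mulVec hC hcard
  refine ⟨ε / 2, half_pos hε, K, fun T₀ => ?_⟩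
  obtain ⟨E, hCE⟩ := exists_abs_mulVec_le_mul_expSum C τ T₀
  filter_upwards [h, eventually_ge_atTop T₀, eventually_ge_atTop 0,
    eventually_le_exp_mul (half_pos hε) (Fintype.card ι),
    eventually_le_exp_mul (half_pos hε) (2 * E),
    eventually_le_exp_mul hε (2 * K)] with Y hY hYT₀ hY0 hcardY hEY hKY
  obtain ⟨P, hP0, lam, hlam, hP⟩ := hY
  have hend : expSum τ lam Y ≤ Real.exp (-(ε / 2 * Y)) :=
    calc expSum τ lam Y ≤ Fintype.card ι * Real.exp (-(ε * Y)) := expSum_le_card_mul_exp hlam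
      _ ≤ Real.exp (ε / 2 * Y) * Real.exp (-(ε * Y)) := by gcongr
      _ = Real.exp (-(ε / 2 * Y)) := by rw [← Real.exp_add]; ring_nf
  have hstart : Real.exp (-(ε / 2 * Y)) ≤ expSum τ lam T₀ := by
    have herror : K * Real.exp (-(1 + ε) * Y) ≤ 1 / 2 :=
      calc K * Real.exp (-(1 + ε) * Y) ≤ Real.exp (ε * Y) / 2 * Real.exp (-(1 + ε) * Y) := by
            gcongr
            linarith
        _ = Real.exp (-Y) / 2 := by rw [div_mul_eq_mul_div, ← Real.exp_add]; ring_nf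
        _ ≤ 1 / 2 := by
            gcongr
            exact Real.exp_le_one_iff.mpr (neg_nonpos.mpr hY0)
    obtain ⟨i, hCi⟩ := exists_half_le_abs_of_int_near hP0 fun i => (hP i).trans herror
    rw [Real.exp_neg, inv_le_iff_one_le_mul₀ (Real.exp_pos _)]
    calc 1 ≤ 2 * (E * expSum τ lam T₀) := by linarith [hCE lam i]
      _ = expSum τ lam T₀ * (2 * E) := by ring
      _ ≤ expSum τ lam T₀ * Real.exp (ε / 2 * Y) :=
        mul_le_mul_of_nonneg_left hEY (expSum_nonneg _ _ _)
  obtain ⟨T, hT, hexp⟩ :=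
    intermediate_value_Icc' hYT₀ (continuous_expSum τ lam).continuousOn ⟨hend, hstart⟩
  exact ⟨P, lam, T, hT, hexp, by simpa only [mul_div_cancel₀ ε two_ne_zero] using hP⟩

theorem half_lt_abs_of_abs_intCast_sub_lt {n : ℤ} {s : ℝ} (h : |n - s| < |s|) : 1 / 2 < |s| := by
  have hn : n ≠ 0 := by
    rintro rfl
    simp only [Int.cast_zero, zero_sub, abs_neg, lt_self_iff_false] at h
  have hn1 : (1 : ℝ) ≤ |(n : ℝ)| := mod_cast Int.one_le_abs hn
  linarith [abs_sub_abs_le_abs_sub (n : ℝ) s]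

theorem abs_dotProduct_le_card_mul {u v : κ → ℝ} {a b : ℝ} (hu : ∀ i, |u i| ≤ a)
    (hv : ∀ i, |v i| ≤ b) : |u ⬝ᵥ v| ≤ Fintype.card κ * (a * b) :=
  calc |u ⬝ᵥ v| ≤ ∑ i, |u i * v i| := Finset.abs_sum_le_sum_abs _ _
    _ ≤ ∑ _i : κ, a * b := Finset.sum_le_sum fun i _ => by
        rw [abs_mul]
        exact mul_le_mul (hu i) (hv i) (abs_nonneg _) ((abs_nonneg _).trans (hu i))
    _ = Fintype.card κ * (a * b) := by rw [Finset.sum_const, Finset.card_univ, nsmul_eq_mul]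

theorem intCast_dotProduct_sub_vecMul_dotProduct (x P : κ → ℤ) (C : Matrix κ ι ℝ) (lam : ι → ℝ) :
    ((x ⬝ᵥ P : ℤ) : ℝ) - (Int.cast ∘ x) ᵥ* C ⬝ᵥ lam =
      (Int.cast ∘ x) ⬝ᵥ (Int.cast ∘ P - C *ᵥ lam) := by
  rw [dotProduct_sub, dotProduct_mulVec]
  simp [dotProduct]

namespace HasIntegerApproximations

variable {τ : ι → ℝ} {C : Matrix κ ι ℝ}

theorem card_add_sum_le (h : HasIntegerApproximations τ C) (hτ : Function.Injective τ) :
    Fintype.card ι + ∑ j, τ j ≤ Fintype.card κ := by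
  cases isEmpty_or_nonempty ι
  · simp
  by_contra! hcard
  obtain ⟨ε, hε, K, hP⟩ :=
    exists_int_near_range_mulVec_expSum_eq (h.linearIndependent_col hτ) hcard
  obtain ⟨T₀, hT₀⟩ := eventually_atTop.mp
    (h.exists_abs_dotProduct_mem_Icc hτ (show 0 < ε / 4 by positivity))
  obtain ⟨Y, hPY, hY0, hY2, hYK⟩ := ((hP T₀).and <| (eventually_ge_atTop 0).and <|
    (eventually_le_exp_mul (half_pos hε) 2).and
      ((eventually_le_exp_mul (half_pos hε) (Fintype.card κ * K + 1)))).exists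
  obtain ⟨P, lam, T, ⟨hT₀T, hTY⟩, hexp, herr⟩ := hPY
  obtain ⟨x, hx, hlower, hupper⟩ := hT₀ T hT₀T lam
  rw [hexp, ← Real.exp_add] at hlower hupper
  set s : ℝ := (Int.cast ∘ x) ᵥ* C ⬝ᵥ lam
  have hs : |s| ≤ 1 / 2 :=
    calc |s| ≤ Real.exp (-(ε / 2 * Y)) := hupper.trans (by gcongr; nlinarith)
      _ ≤ 1 / 2 := by
        rw [Real.exp_neg, one_div]
        exact inv_anti₀ two_pos hY2
  have hdiff : ((x ⬝ᵥ P : ℤ) : ℝ) - s = (Int.cast ∘ x) ⬝ᵥ (Int.cast ∘ P - C *ᵥ lam) :=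
    intCast_dotProduct_sub_vecMul_dotProduct x P C lam
  refine hs.not_gt (half_lt_abs_of_abs_intCast_sub_lt (n := x ⬝ᵥ P) ?_)
  calc |((x ⬝ᵥ P : ℤ) : ℝ) - s|
      ≤ Fintype.card κ * (Real.exp ((1 + ε / 4) * Y) * (K * Real.exp (-(1 + 2 * ε) * Y))) :=
        hdiff ▸ abs_dotProduct_le_card_mul (fun i => (hx i).trans (by gcongr)) herr
    _ = Fintype.card κ * K * Real.exp (-(7 * ε / 4) * Y) := by
        rw [mul_left_comm _ K, ← Real.exp_add, mul_assoc]; ring_nf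
    _ < Real.exp (ε / 2 * Y) * Real.exp (-(7 * ε / 4) * Y) := by gcongr; linarith
    _ ≤ Real.exp (-(ε / 4 * T) + -(ε * Y)) := by
        rw [← Real.exp_add, Real.exp_le_exp]; nlinarith
    _ ≤ |s| := hlower

omit [Fintype ι] in
theorem of_mul {κ' : Type*} [Fintype κ'] {a : Matrix κ κ' ℤ} {E : Matrix κ' ι ℝ}
    (h : HasIntegerApproximations τ (a.map (Int.cast : ℤ → ℝ) * E)) :
    HasIntegerApproximations τ E := by
  intro δ hδ
  obtain ⟨w, hw⟩ := (Set.finite_range fun q : κ × κ' => |(a q.1 q.2 : ℝ)|).bddAbove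
  filter_upwards [h (δ / 2) (half_pos hδ), eventually_ge_atTop 0,
    eventually_le_exp_mul (half_pos hδ) (Fintype.card κ * w)] with T ⟨x, hx, hL⟩ hT hwT
  refine ⟨x ᵥ* a, fun s => ?_, fun j => ?_⟩
  · have hcast : ((x ᵥ* a) s : ℝ) = (Int.cast ∘ x) ⬝ᵥ fun i => (a i s : ℝ) :=
      RingHom.map_vecMul (Int.castRingHom ℝ) a x s
    calc |((x ᵥ* a) s : ℝ)| ≤ Fintype.card κ * (Real.exp ((1 + δ / 2) * T) * w) :=
          hcast ▸ abs_dotProduct_le_card_mul hx fun i => hw ⟨(i, s), rfl⟩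
      _ = Real.exp ((1 + δ / 2) * T) * (Fintype.card κ * w) := mul_left_comm ..
      _ ≤ Real.exp ((1 + δ / 2) * T) * Real.exp (δ / 2 * T) := by gcongr
      _ = Real.exp ((1 + δ) * T) := by rw [← Real.exp_add]; ring_nf
  · have hcast : (Int.cast ∘ (x ᵥ* a) : κ' → ℝ) = (Int.cast ∘ x) ᵥ* a.map (Int.cast : ℤ → ℝ) :=
      funext (RingHom.map_vecMul (Int.castRingHom ℝ) a x)
    rw [hcast, vecMul_vecMul]
    exact ⟨le_trans (by gcongr; linarith) (hL j).1, (hL j).2.trans (by gcongr; linarith)⟩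

theorem card_add_sum_le_finrank_span (h : HasIntegerApproximations τ C)
    (hτ : Function.Injective τ) :
    Fintype.card ι + ∑ j, τ j ≤ Module.finrank ℚ (Submodule.span ℚ (Set.range C.row)) := by
  obtain ⟨a, w, ha⟩ := exists_linearCombination_of_finrank_span (R := ℤ) (K := ℚ) C.row
  have hmul : C = (Matrix.of a).map (Int.cast : ℤ → ℝ) * Matrix.of w := by
    ext i j
    simpa [mul_apply, Rat.smul_def] using congrFun (ha i) j
  rw [hmul] at h
  simpa only [Fintype.card_fin] using h.of_mul.card_add_sum_le hτ

omit [Fintype ι] in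
theorem of_isSyndetic [Finite ι] {s : Set ℕ} (hs : IsSyndetic s) {t : ℕ → ℝ} (hmono : Monotone t)
    (htop : Tendsto t atTop atTop) (hratio : Tendsto (fun n => t (n + 1) / t n) atTop (𝓝 1))
    {x : ℕ → κ → ℤ} {ρ : ℕ → ℝ} {r u : ι → ℕ → ℝ} {b B : ℝ} (hb : 0 < b)
    (hρ : Tendsto ρ atTop (𝓝 1)) (hr : ∀ j, Tendsto (r j) atTop (𝓝 (-τ j)))
    (hu : ∀ᶠ n in atTop, n ∈ s → ∀ j, |u j n| ∈ Set.Icc b B)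
    (hx : ∀ᶠ n in atTop, ∀ i, |(x n i : ℝ)| ≤ Real.exp (ρ n * t n))
    (hL : ∀ᶠ n in atTop, ∀ j,
      |((Int.cast ∘ x n) ᵥ* C) j| = Real.exp (r j n * t n) * |u j n|) :
    HasIntegerApproximations τ C := by
  obtain ⟨m, hms, hm, hmT⟩ := hs.exists_tendsto_div_id hmono htop hratio
  replace hu : ∀ᶠ T in atTop, ∀ j, |u j (m T)| ∈ Set.Icc b B :=
    (hm.eventually hu).mono fun T h => h (hms T)
  have hsize : Tendsto (fun T => ρ (m T) * (t (m T) / T)) atTop (𝓝 1) := by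
    simpa only [mul_one, Function.comp_apply] using (hρ.comp hm).mul hmT
  have hcoord (j) : Tendsto (fun T => r j (m T) * (t (m T) / T) + Real.log |u j (m T)| / T)
      atTop (𝓝 (-τ j)) := by
    have hlog : Tendsto (fun T => Real.log |u j (m T)| / T) atTop (𝓝 0) :=
      tendsto_bdd_div_atTop_nhds_zero (b := Real.log b) (B := Real.log B)
        (hu.mono fun T h => Real.log_le_log hb (h j).1)
        (hu.mono fun T h => Real.log_le_log (hb.trans_le (h j).1) (h j).2) tendsto_id
    simpa only [mul_one, add_zero, Function.comp_apply] using (((hr j).comp hm).mul hmT).add hlog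
  intro δ hδ
  filter_upwards [eventually_gt_atTop 0, hu, hm.eventually hx, hm.eventually hL,
    hsize.eventually (ge_mem_nhds (lt_add_of_pos_right 1 hδ)),
    eventually_all.mpr fun j => (hcoord j).eventually
      (Icc_mem_nhds (sub_lt_self _ hδ) (lt_add_of_pos_right _ hδ))]
    with T hT huT hxT hLT hsizeT hcoordT
  refine ⟨x (m T), fun i => (hxT i).trans ?_, fun j => ?_⟩
  · calc Real.exp (ρ (m T) * t (m T)) = Real.exp (ρ (m T) * (t (m T) / T) * T) := by
          rw [mul_assoc, div_mul_cancel₀ _ hT.ne']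
      _ ≤ Real.exp ((1 + δ) * T) := by gcongr
  · have hexp : Real.exp (r j (m T) * t (m T)) * |u j (m T)| =
        Real.exp ((r j (m T) * (t (m T) / T) + Real.log |u j (m T)| / T) * T) := by
      rw [add_mul, mul_assoc, div_mul_cancel₀ _ hT.ne', div_mul_cancel₀ _ hT.ne', Real.exp_add,
        Real.exp_log (hb.trans_le (huT j).1)]
    rw [hLT, hexp]
    exact ⟨Real.exp_le_exp.mpr (mul_le_mul_of_nonneg_right (hcoordT j).1 hT.le),
      Real.exp_le_exp.mpr (mul_le_mul_of_nonneg_right (hcoordT j).2 hT.le)⟩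

end HasIntegerApproximations

end

theorem eventually_abs_cos_add_mem_Icc {ι : Type*} [Finite ι] {θ η : ι → ℕ → ℝ}
    (hη : ∀ j, Tendsto (η j) atTop (𝓝 0)) {c : ℝ} (hc : 0 < c) :
    ∀ᶠ n in atTop, (∀ j, c < |Real.cos (θ j n)|) →
      ∀ j, |Real.cos (θ j n) + η j n| ∈ Set.Icc (c / 2) 2 := by
  have hsmall (j) : ∀ᶠ n in atTop, |η j n| ≤ min (c / 2) 1 :=
    (hη j).abs.eventually (ge_mem_nhds (by rw [abs_zero]; positivity))
  filter_upwards [eventually_all.mpr hsmall] with n hn hcos j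
  obtain ⟨hnc, hn1⟩ := le_min_iff.mp (hn j)
  constructor
  · linarith [hcos j, abs_sub_abs_le_abs_add (Real.cos (θ j n)) (η j n)]
  · linarith [abs_add_le (Real.cos (θ j n)) (η j n), Real.abs_cos_le_one (θ j n)]

theorem tendsto_log_succ_div_log_of_le {Q : ℕ → ℝ} (hmono : Monotone Q) (hpos : ∀ n, 0 < Q n)
    (htop : Tendsto Q atTop atTop) {M : ℝ}
    (h : ∀ᶠ n : ℕ in atTop, Real.log (Q (n + 1)) ≤ (1 + M / n) * Real.log (Q n)) :
    Tendsto (fun n => Real.log (Q (n + 1)) / Real.log (Q n)) atTop (𝓝 1) := by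
  have hlog : ∀ᶠ n in atTop, 0 < Real.log (Q n) :=
    (Real.tendsto_log_atTop.comp htop).eventually_gt_atTop 0
  have hlim : Tendsto (fun n : ℕ => 1 + M / n) atTop (𝓝 1) := by
    simpa only [add_zero] using (tendsto_const_div_atTop_nhds_zero_nat M).const_add 1
  refine tendsto_of_tendsto_of_tendsto_of_le_of_le' tendsto_const_nhds hlim ?_ ?_
  · exact hlog.mono fun n hn =>
      (one_le_div hn).mpr (Real.log_le_log (hpos n) (hmono n.le_succ))
  · filter_upwards [hlog, h] with n hn hle using (div_le_iff₀ hn).mpr hle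

theorem stmt6_general {ι κ : Type*} [Fintype ι] [Fintype κ] (C : κ → ι → ℝ) (τ ω φ : ι → ℝ)
    (hτ : Function.Injective τ)
    (hosc : ∃ n : ℕ, ∀ j, ∀ m : ℤ, (n : ℝ) * ω j + φ j ≠ Real.pi / 2 + m * Real.pi)
    (Q : ℕ → ℝ) (hQmono : Monotone Q) (hQpos : ∀ n, 0 < Q n) (hQtop : Tendsto Q atTop atTop)
    (hQratio : Tendsto (fun n => Real.log (Q (n + 1)) / Real.log (Q n)) atTop (𝓝 1))
    (l : ℕ → κ → ℤ) (ε η : ι → ℕ → ℝ) (θ : ℕ → ℝ)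
    (hε : ∀ j, Tendsto (ε j) atTop (𝓝 0)) (hη : ∀ j, Tendsto (η j) atTop (𝓝 0))
    (hθ : Tendsto θ atTop (𝓝 0))
    (hl : ∀ᶠ n in atTop, ∀ i, |(l n i : ℝ)| ≤ Q n ^ (1 + θ n))
    (hcoord : ∀ᶠ n in atTop, ∀ j, |∑ i, (l n i : ℝ) * C i j| =
      Q n ^ (-τ j + ε j n) * |Real.cos (n * ω j + φ j) + η j n|) :
    Fintype.card ι + ∑ j, τ j ≤ Module.finrank ℚ (Submodule.span ℚ (Set.range C)) := by
  obtain ⟨n₀, hn₀⟩ := hosc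
  have hcos (j) : Real.cos (n₀ * ω j + φ j) ≠ 0 := fun h => by
    obtain ⟨m, hm⟩ := Real.cos_eq_zero_iff.mp h
    exact hn₀ j m (hm.trans (by ring))
  obtain ⟨c, hc, hs⟩ := exists_isSyndetic_setOf_lt_abs_cos hcos
  have hrpow (n : ℕ) (a : ℝ) : Q n ^ a = Real.exp (a * Real.log (Q n)) := by
    rw [Real.rpow_def_of_pos (hQpos n), mul_comm]
  simp only [hrpow] at hl hcoord
  have happrox : HasIntegerApproximations τ (Matrix.of C) :=
    .of_isSyndetic hs (fun m n hmn => Real.log_le_log (hQpos m) (hQmono hmn))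
      (Real.tendsto_log_atTop.comp hQtop) hQratio (half_pos hc)
      (by simpa only [add_zero] using hθ.const_add 1)
      (fun j => by simpa only [add_zero] using (hε j).const_add (-τ j))
      (eventually_abs_cos_add_mem_Icc hη hc) hl hcoord
  exact happrox.card_add_sum_le_finrank_span hτ

/-- Nesterenko-type criterion, column form: under the stated hypotheses on the integer
coefficients ℓ_{i,n} and vectors C_1,…,C_p ∈ ℝ^k, the rank over ℚ of C_1,…,C_p in ℝ^k viewed
as a ℚ-vector space is at least k + τ_1 + … + τ_k. -/
theorem stmt6
    (k p : ℕ) (hk : 1 ≤ k) (hp : 1 ≤ p)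
    (C : Fin p → Fin k → ℝ)
    (τs ωs φs : Fin k → ℝ)
    (hτpos : ∀ j, 0 < τs j) (hτinj : Function.Injective τs)
    (hosc : {n : ℕ | ∀ j : Fin k, ∀ m : ℤ,
      (n : ℝ) * ωs j + φs j ≠ Real.pi / 2 + m * Real.pi}.Infinite)
    (Q : ℕ → ℕ) (hQmono : StrictMono Q) (hQpos : ∀ n, 0 < Q n)
    (hQgrowth :
      (∃ M : ℝ, 0 < M ∧ ∀ n : ℕ, 1 ≤ n →
        Real.log (Q (n + 1)) ≤ (1 + M / n) * Real.log (Q n)) ∨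
      ((∀ j, ωs j = 0) ∧
        Filter.Tendsto (fun n => Real.log (Q (n + 1)) / Real.log (Q n))
          Filter.atTop (nhds 1)))
    (l : ℕ → Fin p → ℤ)
    (εs ηs : Fin k → ℕ → ℝ) (θs : ℕ → ℝ)
    (hεs : ∀ j, Filter.Tendsto (εs j) Filter.atTop (nhds 0))
    (hηs : ∀ j, Filter.Tendsto (ηs j) Filter.atTop (nhds 0))
    (hθs : Filter.Tendsto θs Filter.atTop (nhds 0))
    (hl : ∀ n : ℕ, 1 ≤ n → ∀ i, |(l n i : ℝ)| ≤ (Q n : ℝ) ^ (1 + θs n))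
    (hcoord : ∀ n : ℕ, 1 ≤ n → ∀ j : Fin k,
      |∑ i, (l n i : ℝ) * C i j| =
        (Q n : ℝ) ^ (-τs j + εs j n) * |Real.cos ((n : ℝ) * ωs j + φs j) + ηs j n|) :
    (k : ℝ) + ∑ j, τs j ≤
      (Module.finrank ℚ (Submodule.span ℚ (Set.range C)) : ℝ) := by
  have hmono : Monotone fun n => (Q n : ℝ) := Nat.mono_cast.comp hQmono.monotone
  have hpos (n) : 0 < (Q n : ℝ) := mod_cast hQpos n
  have htop : Tendsto (fun n => (Q n : ℝ)) atTop atTop :=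
    tendsto_natCast_atTop_atTop.comp hQmono.tendsto_atTop
  have hratio : Tendsto (fun n => Real.log (Q (n + 1)) / Real.log (Q n)) atTop (𝓝 1) :=
    hQgrowth.elim (fun ⟨_, _, hM⟩ => tendsto_log_succ_div_log_of_le hmono hpos htop
      ((eventually_ge_atTop 1).mono hM)) And.right
  simpa only [Fintype.card_fin] using stmt6_general C τs ωs φs hτinj hosc.nonempty
    (fun n => (Q n : ℝ)) hmono hpos htop hratio l εs ηs θs hεs hηs hθs
    ((eventually_ge_atTop 1).mono hl) ((eventually_ge_atTop 1).mono hcoord)
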